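/- Let F be a field, n ≥ 1, and a, b ∈ ℤ_{≥0}^n. Let Q ∈ F[x_1,…,x_n] with deg Q ≤ |a| = a_1+…+a_n, and let R ∈ F[x_1,…,x_n,y_1,…,y_n] be homogeneous of degree |b|. Set P(x,y) = Q(x)·R(x,y). For k ≥ 1 consider nk variables x^1,…,x^k (each x^j = (x^j_1,…,x^j_n), with x^{k+1} ≡ x^1) and P_k = ∏_{j=1}^k P(x^j, x^{j+1}). Let I be the (finite) set of pairs α = (α¹, α²) with α¹, α² ∈ ℤ_{≥0}^n and |α¹| + |α²| = |b|, and define the matrix Φ ∈ F^{I × I} by Φ(α, β) = ([x^{α¹} y^{α²}]R) · ([x^{a + b − α¹ − β²}]Q), where a coefficient with a negative exponent entry is 0. Then the coefficient of ∏_{j=1}^k (x^j)^{a+b} in P_k equals tr(Φ^k). -/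

import Mathlib

/-!
Write `P(x, y) = ∑_α U_α(x) V_α(y)` and expand the cyclic product `∏_j P(x^j, x^{j+1})`: a choice of
one summand per factor is a map `f : Fin k → I`, and regrouping by blocks of variables turns its
contribution into `∏_j (U_{f j} V_{f (j-1)})(x^j)`. Coefficients of a product over disjoint blocks
multiply, so the contribution of `f` to the coefficient of `∏_j (x^j)^c` is
`∏_j [x^c](U_{f j} V_{f (j-1)})`, and the sum over `f` is the closed-walk expansion of the trace of
the `k`-th power of the matrix `[x^c](U_α V_β)`. The matrix `Φ` is the case in which `U_α` is `Q`
times a monomial of `R` in `x` and `V_α` is a monomial in `y`.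
-/

open MvPolynomial Finset

/-- Index set for the matrix `Φ`: pairs `α = (α¹, α²)` of exponent vectors in
`ℤ_{≥0}^n` with `|α¹| + |α²| = B`. (Each entry is then at most `B`, so entries
are recorded in `Fin (B + 1)`.) -/
abbrev PhiIndex (n B : ℕ) :=
  {p : (Fin n → Fin (B + 1)) × (Fin n → Fin (B + 1)) //
    (∑ i, (p.1 i : ℕ)) + (∑ i, (p.2 i : ℕ)) = B}

/-- The matrix `Φ(α, β) = ([x^{α¹} y^{α²}]R) · ([x^{a+b-α¹-β²}]Q)`, where a
coefficient with a negative exponent entry is interpreted as `0`. -/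
noncomputable def PhiMatrix (F : Type*) [Field F] (n : ℕ) (a b : Fin n → ℕ)
    (Q : MvPolynomial (Fin n) F) (R : MvPolynomial ((Fin n) ⊕ (Fin n)) F) :
    Matrix (PhiIndex n (∑ i, b i)) (PhiIndex n (∑ i, b i)) F :=
  fun α β =>
    R.coeff (Finsupp.equivFunOnFinite.symm
        (Sum.elim (fun i => (α.1.1 i : ℕ)) fun i => (α.1.2 i : ℕ))) *
      if ∀ i, (α.1.1 i : ℕ) + (β.1.2 i : ℕ) ≤ a i + b i then
        Q.coeff (Finsupp.equivFunOnFinite.symm fun i =>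
          a i + b i - (α.1.1 i : ℕ) - (β.1.2 i : ℕ))
      else 0

/-- The polynomial `P_k = ∏_{j=1}^k P(x^j, x^{j+1})` in the `nk` variables
`x^j_i` (with `x^{k+1} ≡ x^1`), where `P(x, y) = Q(x) · R(x, y)`. -/
noncomputable def Pk (F : Type*) [Field F] (n k : ℕ) [NeZero k]
    (Q : MvPolynomial (Fin n) F) (R : MvPolynomial ((Fin n) ⊕ (Fin n)) F) :
    MvPolynomial (Fin k × Fin n) F :=
  ∏ j : Fin k,
    (Q.rename Sum.inl * R).rename (Sum.elim (fun i => (j, i)) fun i => (j + 1, i))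

section ClosedWalks

variable {A I : Type*} [CommSemiring A] [Fintype I] [DecidableEq I]

lemma matrix_pow_succ_apply_eq_sum_prod (M : Matrix I I A) (m : ℕ) (s t : I) :
    (M ^ (m + 1)) s t = ∑ g : Fin m → I, ∏ l : Fin (m + 1),
      M ((Fin.cons s g : Fin (m + 1) → I) l) ((Fin.snoc g t : Fin (m + 1) → I) l) := by
  induction m generalizing s with
  | zero => simp [Fin.snoc]
  | succ m ih =>
    rw [pow_succ', Matrix.mul_apply, ← (Fin.consEquiv fun _ : Fin (m + 1) => I).sum_comp,
      Fintype.sum_prod_type]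
    refine sum_congr rfl fun v _ => ?_
    rw [ih, mul_sum]
    refine sum_congr rfl fun g _ => ?_
    change _ = ∏ l, M ((Fin.cons s (Fin.cons v g : Fin (m + 1) → I) : Fin (m + 2) → I) l)
      ((Fin.snoc (Fin.cons v g : Fin (m + 1) → I) t : Fin (m + 2) → I) l)
    rw [← Fin.cons_snoc_eq_snoc_cons, Fin.prod_univ_succ (n := m + 1)]
    simp only [Fin.cons_zero, Fin.cons_succ]

lemma trace_matrix_pow_eq_sum_prod (M : Matrix I I A) (k : ℕ) [NeZero k] :
    (M ^ k).trace = ∑ f : Fin k → I, ∏ j, M (f j) (f (j + 1)) := by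
  obtain ⟨m, rfl⟩ := Nat.exists_eq_succ_of_ne_zero (NeZero.ne k)
  rw [← (Fin.consEquiv fun _ : Fin (m + 1) => I).sum_comp, Fintype.sum_prod_type]
  refine sum_congr rfl fun s _ => ?_
  rw [Matrix.diag_apply, matrix_pow_succ_apply_eq_sum_prod]
  refine sum_congr rfl fun g _ => prod_congr rfl fun l _ => ?_
  congr 1
  induction l using Fin.lastCases with
  | last => simp
  | cast l => simp [Fin.coeSucc_eq_succ]

lemma trace_matrix_pow_eq_sum_prod_sub_one (M : Matrix I I A) (k : ℕ) [NeZero k] :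
    (M ^ k).trace = ∑ f : Fin k → I, ∏ j, M (f j) (f (j - 1)) := by
  rw [← Matrix.trace_transpose, Matrix.transpose_pow, trace_matrix_pow_eq_sum_prod]
  refine sum_congr rfl fun f _ => ?_
  rw [← Equiv.prod_comp (Equiv.addRight (1 : Fin k)) fun j => M (f j) (f (j - 1))]
  simp only [Equiv.coe_addRight, add_sub_cancel_right, Matrix.transpose_apply]

end ClosedWalks

section Blocks

variable {A ι σ : Type*} [CommSemiring A] [Fintype ι]

lemma sum_mapDomain_mk_apply (g : ι → σ →₀ ℕ) (j : ι) (i : σ) :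
    (∑ j', (g j').mapDomain (Prod.mk j')) (j, i) = g j i := by
  rw [Finsupp.finsetSum_apply, Fintype.sum_eq_single j]
  · exact Finsupp.mapDomain_apply (Prod.mk_right_injective j) _ _
  · intro j' hj
    exact Finsupp.mapDomain_of_notMem_range _ _ (by simpa using hj)

lemma sum_mapDomain_mk_eq_iff (g : ι → σ →₀ ℕ) (d : ι × σ →₀ ℕ) :
    ∑ j, (g j).mapDomain (Prod.mk j) = d ↔ g = d.curry := by
  simp only [funext_iff, Finsupp.ext_iff, Prod.forall, sum_mapDomain_mk_apply,
    Finsupp.curry_apply]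

lemma coeff_prod_rename_mk (p : ι → MvPolynomial σ A) (d : ι × σ →₀ ℕ) :
    coeff d (∏ j, rename (Prod.mk j) (p j)) = ∏ j, coeff (d.curry j) (p j) := by
  classical
  have hrename (j : ι) : rename (Prod.mk j) (p j) =
      ∑ s ∈ (p j).support, monomial (s.mapDomain (Prod.mk j)) (coeff s (p j)) := by
    conv_lhs => rw [(p j).as_sum, map_sum]
    simp only [rename_monomial]
  simp only [hrename, prod_univ_sum, coeff_sum, ← monomial_sum_prod, coeff_monomial,
    sum_mapDomain_mk_eq_iff]
  rw [sum_ite_eq']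
  refine ite_eq_left_iff.mpr fun hd => ?_
  obtain ⟨j, hj⟩ : ∃ j, coeff (d.curry j) (p j) = 0 := by
    simpa only [Fintype.mem_piFinset, not_forall, notMem_support_iff] using hd
  exact (prod_eq_zero (mem_univ j) hj).symm

end Blocks

section CyclicProd

variable {A σ I : Type*} [CommSemiring A] [Fintype I]

/-- The cyclic product `∏_j P(x^j, x^{j+1})` of `P(x, y)` in `k` blocks of variables `x^j`. The
blocks are indexed by `Fin k`, whose addition is modulo `k`. -/
noncomputable def cyclicProd (k : ℕ) [NeZero k] (P : MvPolynomial (σ ⊕ σ) A) :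
    MvPolynomial (Fin k × σ) A :=
  ∏ j : Fin k, rename (Sum.elim (Prod.mk j) (Prod.mk (j + 1))) P

lemma cyclicProd_sum_mul (k : ℕ) [NeZero k] (U V : I → MvPolynomial σ A) :
    cyclicProd k (∑ α, rename Sum.inl (U α) * rename Sum.inr (V α)) =
      ∑ f : Fin k → I, ∏ j, rename (Prod.mk j) (U (f j) * V (f (j - 1))) := by
  simp only [cyclicProd, map_sum, map_mul, rename_rename, Sum.elim_comp_inl, Sum.elim_comp_inr]
  rw [Fintype.prod_sum]
  refine sum_congr rfl fun f _ => ?_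
  rw [prod_mul_distrib, prod_mul_distrib,
    ← Equiv.prod_comp (Equiv.addRight (1 : Fin k)) fun j => rename (Prod.mk j) (V (f (j - 1)))]
  simp only [Equiv.coe_addRight, add_sub_cancel_right]

theorem coeff_cyclicProd_sum_mul [DecidableEq I] (k : ℕ) [NeZero k]
    (U V : I → MvPolynomial σ A) (c : σ →₀ ℕ) (d : Fin k × σ →₀ ℕ)
    (hd : ∀ j i, d (j, i) = c i) :
    coeff d (cyclicProd k (∑ α, rename Sum.inl (U α) * rename Sum.inr (V α))) =
      (Matrix.of (fun α β => coeff c (U α * V β)) ^ k).trace := by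
  have hcurry (j : Fin k) : d.curry j = c := Finsupp.ext (hd j)
  simp only [cyclicProd_sum_mul, coeff_sum, coeff_prod_rename_mk, hcurry,
    trace_matrix_pow_eq_sum_prod_sub_one, Matrix.of_apply]

end CyclicProd

section TransferMatrix

variable {A σ I : Type*} [CommSemiring A] [Fintype I]

/-- The matrix `Φ(α, β) = ([x^{u α} y^{v α}]R) · ([x^{c - u α - v β}]Q)` for exponents `u`, `v`
indexed by an arbitrary type. The second factor is encoded as the coefficient of `x^c` in
`Q · x^{u α + v β}`, which vanishes when `c - u α - v β` has a negative entry. -/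
noncomputable def transferMatrix (u v : I → σ →₀ ℕ) (c : σ →₀ ℕ) (Q : MvPolynomial σ A)
    (R : MvPolynomial (σ ⊕ σ) A) : Matrix I I A :=
  Matrix.of fun α β =>
    coeff ((u α).sumElim (v α)) R * coeff c (Q * monomial (u α + v β) 1)

lemma eq_sum_monomial_of_support_subset_range {τ : Type*} {p : MvPolynomial τ A}
    {e : I → τ →₀ ℕ} (he : Function.Injective e) (hp : (p.support : Set (τ →₀ ℕ)) ⊆ Set.range e) :
    p = ∑ α, monomial (e α) (coeff (e α) p) := by
  classical
  ext d
  simp only [coeff_sum, coeff_monomial]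
  by_cases hd : d ∈ Set.range e
  · obtain ⟨α, rfl⟩ := hd
    simp [he.eq_iff]
  · rw [notMem_support_iff.mp fun h => hd (hp h)]
    exact (sum_eq_zero fun α _ => if_neg fun h => hd ⟨α, h⟩).symm

lemma monomial_sumElim (s t : σ →₀ ℕ) (r : A) :
    monomial (s.sumElim t) r =
      rename Sum.inl (monomial s r) * rename Sum.inr (monomial t 1) := by
  rw [rename_monomial, rename_monomial, monomial_mul, mul_one, Finsupp.sumElim_eq_add]

theorem stmt3_general [DecidableEq I] (k : ℕ) [NeZero k] (u v : I → σ →₀ ℕ)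
    (huv : Function.Injective fun α => (u α).sumElim (v α))
    (c : σ →₀ ℕ) (d : Fin k × σ →₀ ℕ) (hd : ∀ j i, d (j, i) = c i)
    (Q : MvPolynomial σ A) (R : MvPolynomial (σ ⊕ σ) A)
    (hR : (R.support : Set (σ ⊕ σ →₀ ℕ)) ⊆ Set.range fun α => (u α).sumElim (v α)) :
    coeff d (cyclicProd k (rename Sum.inl Q * R)) = (transferMatrix u v c Q R ^ k).trace := by
  let r (α : I) : A := coeff ((u α).sumElim (v α)) R
  have hsplit : rename Sum.inl Q * R =
      ∑ α, rename Sum.inl (Q * monomial (u α) (r α)) * rename Sum.inr (monomial (v α) 1) := by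
    conv_lhs => rw [eq_sum_monomial_of_support_subset_range huv hR, mul_sum]
    simp only [r, monomial_sumElim, map_mul, mul_assoc]
  have hentry : transferMatrix u v c Q R =
      Matrix.of fun α β => coeff c (Q * monomial (u α) (r α) * monomial (v β) 1) := by
    ext α β
    simp only [transferMatrix, Matrix.of_apply, mul_assoc, monomial_mul, mul_one]
    rw [← coeff_C_mul, mul_left_comm, C_mul_monomial, mul_one]
  rw [hsplit, hentry]
  exact coeff_cyclicProd_sum_mul k _ _ c d hd

end TransferMatrix

namespace PhiIndex

variable {n B : ℕ}

/-- The exponent `α¹` of the variables `x` in an index `α = (α¹, α²)`. -/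
noncomputable def xExponent (α : PhiIndex n B) : Fin n →₀ ℕ :=
  Finsupp.equivFunOnFinite.symm fun i => (α.1.1 i : ℕ)

/-- The exponent `α²` of the variables `y` in an index `α = (α¹, α²)`. -/
noncomputable def yExponent (α : PhiIndex n B) : Fin n →₀ ℕ :=
  Finsupp.equivFunOnFinite.symm fun i => (α.1.2 i : ℕ)

lemma sumElim_exponents_injective :
    Function.Injective fun α : PhiIndex n B => α.xExponent.sumElim α.yExponent := by
  intro α β h
  refine Subtype.ext (Prod.ext (funext fun i => Fin.ext ?_) (funext fun i => Fin.ext ?_))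
  · exact DFunLike.congr_fun h (Sum.inl i)
  · exact DFunLike.congr_fun h (Sum.inr i)

lemma mem_range_sumElim_exponents {d : Fin n ⊕ Fin n →₀ ℕ} (hd : d.degree = B) :
    d ∈ Set.range fun α : PhiIndex n B => α.xExponent.sumElim α.yExponent := by
  have hlt (s : Fin n ⊕ Fin n) : d s < B + 1 :=
    Nat.lt_succ_of_le (hd ▸ Finsupp.le_degree s d)
  rw [Finsupp.degree_eq_sum, Fintype.sum_sum_type] at hd
  refine ⟨⟨(fun i => ⟨_, hlt (Sum.inl i)⟩, fun i => ⟨_, hlt (Sum.inr i)⟩), hd⟩, ?_⟩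
  ext (i | i) <;> rfl

end PhiIndex

lemma support_subset_range_sumElim_exponents {A : Type*} [CommSemiring A] {n B : ℕ}
    {R : MvPolynomial (Fin n ⊕ Fin n) A} (hR : R.IsHomogeneous B) :
    (R.support : Set (Fin n ⊕ Fin n →₀ ℕ)) ⊆
      Set.range fun α : PhiIndex n B => α.xExponent.sumElim α.yExponent := fun _ hd =>
  PhiIndex.mem_range_sumElim_exponents <|
    not_imp_comm.mp hR.coeff_eq_zero (mem_support_iff.mp hd)

lemma phiMatrix_eq_transferMatrix {F : Type*} [Field F] {n : ℕ} (a b : Fin n → ℕ)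
    (Q : MvPolynomial (Fin n) F) (R : MvPolynomial (Fin n ⊕ Fin n) F) :
    PhiMatrix F n a b Q R = transferMatrix PhiIndex.xExponent PhiIndex.yExponent
      (Finsupp.equivFunOnFinite.symm (a + b)) Q R := by
  ext α β
  have hcoeff : α.xExponent.sumElim α.yExponent = Finsupp.equivFunOnFinite.symm
      (Sum.elim (fun i => (α.1.1 i : ℕ)) fun i => (α.1.2 i : ℕ)) := by
    ext (i | i) <;> rfl
  have hle : α.xExponent + β.yExponent ≤ Finsupp.equivFunOnFinite.symm (a + b) ↔
      ∀ i, (α.1.1 i : ℕ) + (β.1.2 i : ℕ) ≤ a i + b i := Iff.rfl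
  have hsub : Finsupp.equivFunOnFinite.symm (a + b) - (α.xExponent + β.yExponent) =
      Finsupp.equivFunOnFinite.symm fun i => a i + b i - (α.1.1 i : ℕ) - (β.1.2 i : ℕ) := by
    ext i
    exact Nat.sub_add_eq ..
  simp only [PhiMatrix, transferMatrix, Matrix.of_apply, coeff_mul_monomial', hcoeff, hle, hsub,
    mul_one]

/-- With `Q` of degree at most `|a|` and `R` homogeneous of degree
`|b|`, the coefficient of `∏_{j=1}^k (x^j)^{a+b}` in `P_k` equals `tr(Φ^k)`. -/
theorem stmt3 (F : Type*) [Field F] (n : ℕ) (hn : 1 ≤ n) (a b : Fin n → ℕ)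
    (Q : MvPolynomial (Fin n) F) (hQ : Q.totalDegree ≤ ∑ i, a i)
    (R : MvPolynomial ((Fin n) ⊕ (Fin n)) F) (hR : R.IsHomogeneous (∑ i, b i))
    (k : ℕ) [NeZero k] :
    MvPolynomial.coeff
        (Finsupp.equivFunOnFinite.symm fun p : Fin k × Fin n => a p.2 + b p.2)
        (Pk F n k Q R) =
      Matrix.trace (PhiMatrix F n a b Q R ^ k) := by
  rw [phiMatrix_eq_transferMatrix]
  exact stmt3_general k _ _ PhiIndex.sumElim_exponents_injective _ _ (fun _ _ => rfl) Q R
    (support_subset_range_sumElim_exponents hR)
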